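/- Two formulas α and β are strongly equivalent (i.e., for every theory Δ, the theories {α} ∪ Δ and {β} ∪ Δ have the same equilibrium models) if and only if α ↔ β is X5-valid. -/

import Mathlib

open scoped Classical

namespace X5Paper

/-- Explicit literals: an atom `p` or its explicit negation `∼p`. -/
inductive XLit (At : Type) : Type
  | pos : At → XLit At
  | neg : At → XLit At

/-- A set of explicit literals is consistent if it contains no atom together
with its explicit negation. -/
def Consistent {At : Type} (T : Set (XLit At)) : Prop :=
  ∀ p : At, ¬ (XLit.pos p ∈ T ∧ XLit.neg p ∈ T)

/-- Nested expressions: ⊤, ⊥, atoms, ∧, ∨, default negation ¬, explicit negation ∼. -/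
inductive NExp (At : Type) : Type
  | top : NExp At
  | bot : NExp At
  | atom : At → NExp At
  | conj : NExp At → NExp At → NExp At
  | disj : NExp At → NExp At → NExp At
  | dneg : NExp At → NExp At
  | xneg : NExp At → NExp At

variable {At : Type}

mutual
/-- Satisfaction `T ⊨ F` of a nested expression by a set of explicit literals. -/
def NExp.sat (T : Set (XLit At)) : NExp At → Prop
  | .top => True
  | .bot => False
  | .atom p => XLit.pos p ∈ T
  | .conj F G => NExp.sat T F ∧ NExp.sat T G
  | .disj F G => NExp.sat T F ∨ NExp.sat T G
  | .dneg F => ¬ NExp.sat T F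
  | .xneg F => NExp.fals T F

/-- Falsification `T ⫤ F` of a nested expression by a set of explicit literals. -/
def NExp.fals (T : Set (XLit At)) : NExp At → Prop
  | .top => False
  | .bot => True
  | .atom p => XLit.neg p ∈ T
  | .conj F G => NExp.fals T F ∨ NExp.fals T G
  | .disj F G => NExp.fals T F ∧ NExp.fals T G
  | .dneg F => NExp.sat T F
  | .xneg F => NExp.sat T F
end

/-- The reduct `F^T` of a nested expression. -/
noncomputable def NExp.reduct (T : Set (XLit At)) : NExp At → NExp At
  | .top => .top
  | .bot => .bot
  | .atom p => .atom p
  | .conj F G => .conj (NExp.reduct T F) (NExp.reduct T G)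
  | .disj F G => .disj (NExp.reduct T F) (NExp.reduct T G)
  | .dneg F => if NExp.sat T F then .bot else .top
  | .xneg F => .xneg (NExp.reduct T F)

/-- Formulas: atoms, ⊥, ∧, ∨, →, explicit negation ∼. -/
inductive Frm (At : Type) : Type
  | atom : At → Frm At
  | bot : Frm At
  | conj : Frm At → Frm At → Frm At
  | disj : Frm At → Frm At → Frm At
  | impl : Frm At → Frm At → Frm At
  | xneg : Frm At → Frm At

/-- Default negation `¬φ := φ → ⊥`. -/
def Frm.neg (φ : Frm At) : Frm At := Frm.impl φ Frm.bot

/-- `⊤ := ¬⊥`. -/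
def Frm.top : Frm At := Frm.neg Frm.bot

/-- Weak equivalence `φ ↔ ψ := (φ→ψ) ∧ (ψ→φ)`. -/
def Frm.iff (φ ψ : Frm At) : Frm At := Frm.conj (Frm.impl φ ψ) (Frm.impl ψ φ)

/-- Strong equivalence connective `φ ⇔ ψ := (φ↔ψ) ∧ (∼φ↔∼ψ)`. -/
def Frm.siff (φ ψ : Frm At) : Frm At :=
  Frm.conj (Frm.iff φ ψ) (Frm.iff (Frm.xneg φ) (Frm.xneg ψ))

mutual
/-- X5 satisfaction `⟨H,T⟩ ⊨ φ`. -/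
def Sat : Set (XLit At) → Set (XLit At) → Frm At → Prop
  | H, _, .atom p => XLit.pos p ∈ H
  | _, _, .bot => False
  | H, T, .conj φ ψ => Sat H T φ ∧ Sat H T ψ
  | H, T, .disj φ ψ => Sat H T φ ∨ Sat H T ψ
  | H, T, .impl φ ψ => (Sat H T φ → Sat H T ψ) ∧ (Sat T T φ → Sat T T ψ)
  | H, T, .xneg φ => Fals H T φ

/-- X5 falsification `⟨H,T⟩ ⫤ φ`. -/
def Fals : Set (XLit At) → Set (XLit At) → Frm At → Prop
  | H, _, .atom p => XLit.neg p ∈ H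
  | _, _, .bot => True
  | H, T, .conj φ ψ => Fals H T φ ∨ Fals H T ψ
  | H, T, .disj φ ψ => Fals H T φ ∧ Fals H T ψ
  | H, T, .impl φ ψ => Sat T T φ ∧ Fals H T ψ
  | H, T, .xneg φ => Sat H T φ
end

/-- X5 validity: satisfied by every X5-interpretation `⟨H,T⟩`. -/
def X5Valid (φ : Frm At) : Prop :=
  ∀ H T : Set (XLit At), Consistent H → Consistent T → H ⊆ T → Sat H T φ

/-- Nested expressions viewed as formulas (`¬F := F → ⊥`, `⊤ := ¬⊥`). -/
def NExp.toFrm : NExp At → Frm At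
  | .top => Frm.top
  | .bot => .bot
  | .atom p => .atom p
  | .conj F G => .conj F.toFrm G.toFrm
  | .disj F G => .disj F.toFrm G.toFrm
  | .dneg F => Frm.neg F.toFrm
  | .xneg F => .xneg F.toFrm

/-- Uniform substitution `φ[α/p]`. -/
noncomputable def Frm.subst (p : At) (α : Frm At) : Frm At → Frm At
  | .atom q => if q = p then α else .atom q
  | .bot => .bot
  | .conj φ ψ => .conj (Frm.subst p α φ) (Frm.subst p α ψ)
  | .disj φ ψ => .disj (Frm.subst p α φ) (Frm.subst p α ψ)
  | .impl φ ψ => .impl (Frm.subst p α φ) (Frm.subst p α ψ)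
  | .xneg φ => .xneg (Frm.subst p α φ)

/-- A formula contains no explicit negation. -/
def NoXneg : Frm At → Prop
  | .atom _ => True
  | .bot => True
  | .conj φ ψ => NoXneg φ ∧ NoXneg ψ
  | .disj φ ψ => NoXneg φ ∧ NoXneg ψ
  | .impl φ ψ => NoXneg φ ∧ NoXneg ψ
  | .xneg _ => False

/-- HT satisfaction for (∼-free) formulas; the `∼` clause is a dummy. -/
def HTSat : Set At → Set At → Frm At → Prop
  | H, _, .atom p => p ∈ H
  | _, _, .bot => False
  | H, T, .conj φ ψ => HTSat H T φ ∧ HTSat H T ψ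
  | H, T, .disj φ ψ => HTSat H T φ ∨ HTSat H T ψ
  | H, T, .impl φ ψ => (HTSat H T φ → HTSat H T ψ) ∧ (HTSat T T φ → HTSat T T ψ)
  | _, _, .xneg _ => False

/-- HT validity for ∼-free formulas. -/
def HTValid (φ : Frm At) : Prop :=
  ∀ H T : Set At, H ⊆ T → HTSat H T φ

/-- Atom `p` occurs in a formula. -/
def Frm.occurs (p : At) : Frm At → Prop
  | .atom q => q = p
  | .bot => False
  | .conj φ ψ => Frm.occurs p φ ∨ Frm.occurs p ψ
  | .disj φ ψ => Frm.occurs p φ ∨ Frm.occurs p ψ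
  | .impl φ ψ => Frm.occurs p φ ∨ Frm.occurs p ψ
  | .xneg φ => Frm.occurs p φ

/-- Atom `p` occurs only outside the scope of explicit negation `∼`. -/
def OutsideXneg (p : At) : Frm At → Prop
  | .atom _ => True
  | .bot => True
  | .conj φ ψ => OutsideXneg p φ ∧ OutsideXneg p ψ
  | .disj φ ψ => OutsideXneg p φ ∧ OutsideXneg p ψ
  | .impl φ ψ => OutsideXneg p φ ∧ OutsideXneg p ψ
  | .xneg φ => ¬ Frm.occurs p φ

/-- A rule `F → G` of a program. -/
abbrev Rule (At : Type) := NExp At × NExp At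

/-- `T` is a model of a program: it satisfies the head whenever it satisfies the body. -/
def NModels (T : Set (XLit At)) (Prog : Set (Rule At)) : Prop :=
  ∀ r ∈ Prog, NExp.sat T r.1 → NExp.sat T r.2

/-- The reduct `Π^T` of a program. -/
noncomputable def progReduct (T : Set (XLit At)) (Prog : Set (Rule At)) : Set (Rule At) :=
  (fun r : Rule At => (NExp.reduct T r.1, NExp.reduct T r.2)) '' Prog

/-- `T` is an answer set of `Π`: a ⊆-minimal (consistent) model of the reduct `Π^T`. -/
def AnswerSet (Prog : Set (Rule At)) (T : Set (XLit At)) : Prop :=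
  Consistent T ∧ NModels T (progReduct T Prog) ∧
    ∀ T' : Set (XLit At), Consistent T' → T' ⊆ T → NModels T' (progReduct T Prog) → T' = T

/-- The theory corresponding to a program: each rule `F → G` read as an implication. -/
def ruleTheory (Prog : Set (Rule At)) : Set (Frm At) :=
  (fun r : Rule At => Frm.impl r.1.toFrm r.2.toFrm) '' Prog

/-- `⟨T,T⟩` is an equilibrium model of the theory `Γ`. -/
def EqModel (Γ : Set (Frm At)) (T : Set (XLit At)) : Prop :=
  Consistent T ∧ (∀ φ ∈ Γ, Sat T T φ) ∧
    ¬ ∃ H : Set (XLit At), Consistent H ∧ H ⊂ T ∧ ∀ φ ∈ Γ, Sat H T φ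

mutual
/-- Generalized Ferraris reduct `φ^T₊` of a formula (a nested expression). -/
noncomputable def redPos (T : Set (XLit At)) : Frm At → NExp At
  | .atom p => if XLit.pos p ∈ T then .atom p else .bot
  | .bot => .bot
  | .conj α β => if Sat T T (Frm.conj α β) then .conj (redPos T α) (redPos T β) else .bot
  | .disj α β => if Sat T T (Frm.disj α β) then .disj (redPos T α) (redPos T β) else .bot
  | .impl α β => if Sat T T (Frm.impl α β) then .disj (.dneg (redPos T α)) (redPos T β) else .bot
  | .xneg α => if Sat T T (Frm.xneg α) then .xneg (redNeg T α) else .bot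

/-- Generalized Ferraris reduct `φ^T₋` of a formula (a nested expression). -/
noncomputable def redNeg (T : Set (XLit At)) : Frm At → NExp At
  | .atom p => if XLit.neg p ∈ T then .atom p else .top
  | .bot => .bot
  | .conj α β => if Fals T T (Frm.conj α β) then .conj (redNeg T α) (redNeg T β) else .top
  | .disj α β => if Fals T T (Frm.disj α β) then .disj (redNeg T α) (redNeg T β) else .top
  | .impl α β => if Fals T T (Frm.impl α β) then redNeg T β else .top
  | .xneg α => if Fals T T (Frm.xneg α) then .xneg (redPos T α) else .top
end

mutual
/-- Generalized Ferraris reduct `F^T₊` of a nested expression. -/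
noncomputable def nRedPos (T : Set (XLit At)) : NExp At → NExp At
  | .top => .top
  | .bot => .bot
  | .atom p => if XLit.pos p ∈ T then .atom p else .bot
  | .conj α β => if NExp.sat T (NExp.conj α β) then .conj (nRedPos T α) (nRedPos T β) else .bot
  | .disj α β => if NExp.sat T (NExp.disj α β) then .disj (nRedPos T α) (nRedPos T β) else .bot
  | .dneg α => if NExp.sat T (NExp.dneg α) then .dneg (nRedPos T α) else .bot
  | .xneg α => if NExp.sat T (NExp.xneg α) then .xneg (nRedNeg T α) else .bot

/-- Generalized Ferraris reduct `F^T₋` of a nested expression. -/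
noncomputable def nRedNeg (T : Set (XLit At)) : NExp At → NExp At
  | .top => .top
  | .bot => .bot
  | .atom p => if XLit.neg p ∈ T then .atom p else .top
  | .conj α β => if NExp.fals T (NExp.conj α β) then .conj (nRedNeg T α) (nRedNeg T β) else .top
  | .disj α β => if NExp.fals T (NExp.disj α β) then .disj (nRedNeg T α) (nRedNeg T β) else .top
  | .dneg α => if NExp.fals T (NExp.dneg α) then .bot else .top
  | .xneg α => if NExp.fals T (NExp.xneg α) then .xneg (nRedPos T α) else .top
end

/-- The five-valued valuation `M(φ)` of `M = ⟨H,T⟩`. -/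
noncomputable def val (H T : Set (XLit At)) : Frm At → ℤ
  | .atom p =>
      if XLit.pos p ∈ H then 2
      else if XLit.neg p ∈ H then -2
      else if XLit.pos p ∈ T then 1
      else if XLit.neg p ∈ T then -1
      else 0
  | .bot => -2
  | .conj φ ψ => min (val H T φ) (val H T ψ)
  | .disj φ ψ => max (val H T φ) (val H T ψ)
  | .impl φ ψ => if val H T φ ≤ max (val H T ψ) 0 then 2 else val H T ψ
  | .xneg φ => - val H T φ

/-!
X5 satisfaction persists from `⟨H,T⟩` to `⟨T,T⟩` when `H ⊆ T`. Hence the equilibrium models of a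
theory `Γ` in all contexts determine its X5-models: to test `⟨H,T⟩ ⊨ Γ`, take as context the
literals of `H` and all implications between literals of `T \ H`. Over `T`, only `⟨H,T⟩` and
`⟨T,T⟩` satisfy this context, so `T` is an equilibrium model of the extended theory exactly when
`⟨T,T⟩ ⊨ Γ` and it is not the case that `H ≠ T` and `⟨H,T⟩ ⊨ Γ`. Taking `H = T` tests
`⟨T,T⟩ ⊨ Γ`; taking `H ≠ T` then tests `⟨H,T⟩ ⊨ Γ`.
-/

section Satisfaction

variable {H T : Set (XLit At)} {Γ Δ : Set (Frm At)}

theorem Consistent.mono (hT : Consistent T) (hHT : H ⊆ T) : Consistent H :=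
  fun p hp => hT p ⟨hHT hp.1, hHT hp.2⟩

mutual

theorem Sat.persist (hHT : H ⊆ T) : ∀ {φ : Frm At}, Sat H T φ → Sat T T φ
  | .atom _, hp => hHT hp
  | .conj _ _, hφ => hφ.imp (Sat.persist hHT) (Sat.persist hHT)
  | .disj _ _, hφ => hφ.imp (Sat.persist hHT) (Sat.persist hHT)
  | .impl _ _, hφ => ⟨hφ.2, hφ.2⟩
  | .xneg φ, hφ => Fals.persist hHT (φ := φ) hφ

theorem Fals.persist (hHT : H ⊆ T) : ∀ {φ : Frm At}, Fals H T φ → Fals T T φ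
  | .atom _, hp => hHT hp
  | .bot, _ => trivial
  | .conj _ _, hφ => hφ.imp (Fals.persist hHT) (Fals.persist hHT)
  | .disj _ _, hφ => hφ.imp (Fals.persist hHT) (Fals.persist hHT)
  | .impl _ _, hφ => hφ.imp_right (Fals.persist hHT)
  | .xneg φ, hφ => Sat.persist hHT (φ := φ) hφ

end

theorem sat_iff_iff {α β : Frm At} :
    Sat H T (α.iff β) ↔ (Sat H T α ↔ Sat H T β) ∧ (Sat T T α ↔ Sat T T β) := by
  simp only [Frm.iff, Sat]
  tauto

/-- `⟨H,T⟩` is an X5-model of the theory `Γ`; that it is an X5-interpretation is not included. -/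
def Models (H T : Set (XLit At)) (Γ : Set (Frm At)) : Prop :=
  ∀ φ ∈ Γ, Sat H T φ

theorem Models.persist (hHT : H ⊆ T) (h : Models H T Γ) : Models T T Γ :=
  fun φ hφ => (h φ hφ).persist hHT

theorem models_union : Models H T (Γ ∪ Δ) ↔ Models H T Γ ∧ Models H T Δ :=
  forall₂_or_left

theorem models_singleton {φ : Frm At} : Models H T {φ} ↔ Sat H T φ :=
  forall_eq

theorem eqModel_iff :
    EqModel Γ T ↔ Consistent T ∧ Models T T Γ ∧ ∀ H ⊂ T, ¬ Models H T Γ := by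
  refine and_congr_right fun hT => and_congr_right fun _ => ⟨fun h H hHT hH => ?_, ?_⟩
  · exact h ⟨H, hT.mono hHT.subset, hHT, hH⟩
  · rintro h ⟨H, -, hHT, hH⟩
    exact h H hHT hH

end Satisfaction

section Separator

variable {H K T : Set (XLit At)} {Γ : Set (Frm At)}

/-- An explicit literal as a formula, used to write contexts that fix literals. -/
def XLit.toFrm : XLit At → Frm At
  | .pos p => .atom p
  | .neg p => .xneg (.atom p)

theorem sat_toFrm {l : XLit At} : Sat H T l.toFrm ↔ l ∈ H := by
  cases l <;> rfl

/-- The context which isolates `⟨H,T⟩`: the literals of `H`, and all implications between literals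
of `T \ H`, so that a set between `H` and `T` satisfying it contains all of `T \ H` or none. -/
def separator (H T : Set (XLit At)) : Set (Frm At) :=
  XLit.toFrm '' H ∪ Set.image2 (fun l l' => l.toFrm.impl l'.toFrm) (T \ H) (T \ H)

theorem models_separator_iff_forall :
    Models K T (separator H T) ↔ H ⊆ K ∧ ∀ l ∈ T \ H, ∀ l' ∈ T \ H, l ∈ K → l' ∈ K := by
  have sat_impl {l l' : XLit At} (hl' : l' ∈ T \ H) :
      Sat K T (l.toFrm.impl l'.toFrm) ↔ (l ∈ K → l' ∈ K) := by
    simp only [Sat, sat_toFrm, hl'.1, implies_true, and_true]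
  rw [separator, models_union]
  refine and_congr ?_ ?_
  · simp only [Models, Set.forall_mem_image, sat_toFrm, Set.subset_def]
  · exact Set.forall_mem_image2.trans
      (forall₂_congr fun _ _ => forall₂_congr fun _ hl' => sat_impl hl')

theorem models_separator_iff (hHT : H ⊆ T) (hKT : K ⊆ T) :
    Models K T (separator H T) ↔ K = H ∨ K = T := by
  rw [models_separator_iff_forall]
  constructor
  · rintro ⟨hHK : H ⊆ K, himp⟩
    refine or_iff_not_imp_left.2 fun hne => hKT.antisymm fun l' hl' => ?_
    obtain ⟨l, hlK, hlH⟩ := Set.exists_of_ssubset (hHK.ssubset_of_ne (Ne.symm hne))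
    by_cases hl'H : l' ∈ H
    · exact hHK hl'H
    · exact himp l ⟨hKT hlK, hlH⟩ l' ⟨hl', hl'H⟩ hlK
  · rintro (rfl | rfl)
    · exact ⟨subset_rfl, fun l hl _ _ hlK => absurd hlK hl.2⟩
    · exact ⟨hHT, fun _ _ _ hl' _ => hl'.1⟩

theorem eqModel_union_separator_iff (hHT : H ⊆ T) :
    EqModel (Γ ∪ separator H T) T ↔
      Consistent T ∧ Models T T Γ ∧ (H ⊂ T → ¬ Models H T Γ) := by
  have minimal_iff : (∀ K ⊂ T, ¬ Models K T (Γ ∪ separator H T)) ↔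
      (H ⊂ T → ¬ Models H T Γ) := by
    constructor
    · intro h hH hHΓ
      exact h H hH (models_union.2 ⟨hHΓ, (models_separator_iff hHT hHT).2 (.inl rfl)⟩)
    · intro h K hKT hK
      obtain ⟨hKΓ, hKsep⟩ := models_union.1 hK
      obtain rfl | rfl := (models_separator_iff hHT hKT.subset).1 hKsep
      · exact h hKT hKΓ
      · exact hKT.ne rfl
  rw [eqModel_iff, minimal_iff, models_union,
    and_iff_left ((models_separator_iff hHT subset_rfl).2 (.inr rfl))]

end Separator

section StrongEquivalence

variable {Γ₁ Γ₂ : Set (Frm At)}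

/-- Strong equivalence of theories: the same equilibrium models in every context `Δ`. -/
def StrongEquiv (Γ₁ Γ₂ : Set (Frm At)) : Prop :=
  ∀ (Δ : Set (Frm At)) (T : Set (XLit At)), EqModel (Γ₁ ∪ Δ) T ↔ EqModel (Γ₂ ∪ Δ) T

/-- Equivalence of theories in X5: the same X5-models. For two formulas it is the X5-validity of
their biconditional. -/
def X5Equiv (Γ₁ Γ₂ : Set (Frm At)) : Prop :=
  ∀ H T : Set (XLit At), Consistent H → Consistent T → H ⊆ T → (Models H T Γ₁ ↔ Models H T Γ₂)

theorem x5Equiv_singleton_iff {α β : Frm At} : X5Equiv {α} {β} ↔ X5Valid (α.iff β) := by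
  simp only [X5Equiv, X5Valid, models_singleton, sat_iff_iff]
  exact ⟨fun h H T hH hT hHT => ⟨h H T hH hT hHT, h T T hT hT subset_rfl⟩,
    fun h H T hH hT hHT => (h H T hH hT hHT).1⟩

theorem X5Equiv.strongEquiv (h : X5Equiv Γ₁ Γ₂) : StrongEquiv Γ₁ Γ₂ := by
  intro Δ T
  simp only [eqModel_iff, models_union]
  refine and_congr_right fun hT => and_congr (and_congr_left' (h T T hT hT subset_rfl)) ?_
  exact forall₂_congr fun H hHT =>
    not_congr (and_congr_left' (h H T (hT.mono hHT.subset) hT hHT.subset))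

theorem StrongEquiv.x5Equiv (h : StrongEquiv Γ₁ Γ₂) : X5Equiv Γ₁ Γ₂ := by
  intro H T _ hT hHT
  have total : Models T T Γ₁ ↔ Models T T Γ₂ := by
    simpa only [eqModel_union_separator_iff subset_rfl, hT, true_and, ssubset_irrefl,
      false_imp_iff, and_true] using h (separator T T) T
  obtain rfl | hssub := hHT.eq_or_ssubset
  · exact total
  have separated : Models T T Γ₁ ∧ ¬ Models H T Γ₁ ↔ Models T T Γ₂ ∧ ¬ Models H T Γ₂ := by
    simpa only [eqModel_union_separator_iff hHT, hT, true_and, hssub, true_imp_iff]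
      using h (separator H T) T
  have persist₁ : Models H T Γ₁ → Models T T Γ₁ := Models.persist hHT
  have persist₂ : Models H T Γ₂ → Models T T Γ₂ := Models.persist hHT
  tauto

end StrongEquivalence

theorem stmt18_general (Γ₁ Γ₂ : Set (Frm At)) : StrongEquiv Γ₁ Γ₂ ↔ X5Equiv Γ₁ Γ₂ :=
  ⟨StrongEquiv.x5Equiv, X5Equiv.strongEquiv⟩

/-- formulas `α` and `β` are strongly equivalent (for every theory
`Δ`, the theories `{α} ∪ Δ` and `{β} ∪ Δ` have the same equilibrium models) iff
`α ↔ β` is X5-valid. -/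
theorem stmt18 (At : Type) (α β : Frm At) :
    (∀ (Δ : Set (Frm At)) (T : Set (XLit At)),
        EqModel ({α} ∪ Δ) T ↔ EqModel ({β} ∪ Δ) T) ↔
      X5Valid (Frm.iff α β) :=
  (stmt18_general {α} {β}).trans x5Equiv_singleton_iff

end X5Paper
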